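/- Let (i,j) ∈ E be an edge of a finite connected simple graph G with ρ_min ≥ 2, let α_i, α_j ∈ [0,1), and fix ϑ ∈ ℝ. Define t_min(ϑ) = min{[(ϑ − Const_α)/Slope_α]₊, ρ_min − 1}. Then c_OR(i,j) ≥ ϑ implies c_BF(i,j) ≥ 𝔖(i,j) + 𝔗(i,j)·t_min(ϑ). In particular: (a) if ϑ ≤ Const_α the conclusion reduces to c_BF(i,j) ≥ 𝔖(i,j); (b) if ϑ > Const_α + Slope_α·(ρ_min − 1) then no edge with the given (ρ_i,ρ_j,α_i,α_j) satisfies c_OR(i,j) ≥ ϑ. -/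

import Mathlib

namespace Curv

open Finset

noncomputable section

variable {V : Type*} [Fintype V] [DecidableEq V] (G : SimpleGraph V) [DecidableRel G.Adj]

/-- `μ` is a probability distribution on the (finite) vertex set. -/
def IsProb (μ : V → ℝ) : Prop := (∀ x, 0 ≤ μ x) ∧ ∑ x, μ x = 1

/-- `π` is a coupling of `μ` and `ν`. -/
def IsCoupling (μ ν : V → ℝ) (π : V → V → ℝ) : Prop :=
  (∀ x y, 0 ≤ π x y) ∧ (∀ x, ∑ y, π x y = μ x) ∧ (∀ y, ∑ x, π x y = ν y)

/-- Transport cost of a plan `π` with respect to the shortest-path graph distance. -/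
def cost (π : V → V → ℝ) : ℝ := ∑ x, ∑ y, (G.dist x y : ℝ) * π x y

/-- Wasserstein-1 distance between two distributions on the vertex set. -/
def W1 (μ ν : V → ℝ) : ℝ := sInf {c : ℝ | ∃ π, IsCoupling μ ν π ∧ cost G π = c}

/-- Dirac mass at `u`. -/
def dirac (u : V) : V → ℝ := fun x => if x = u then 1 else 0

/-- Uniform distribution on the neighbours of `u`. -/
def unif (u : V) : V → ℝ := fun x => if G.Adj u x then ((G.degree u : ℝ))⁻¹ else 0

/-- Lazy random-walk measure with laziness parameter `α`. -/
def mGen (α : ℝ) (u : V) : V → ℝ := fun x => α * dirac u x + (1 - α) * unif G u x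

/-- Canonical laziness `1/(deg u + 1)`. -/
def alphaL (u : V) : ℝ := ((G.degree u : ℝ) + 1)⁻¹

/-- The lazy random-walk measure `m_u`. -/
def mLazy (u : V) : V → ℝ := mGen G (alphaL G u) u

/-- Ollivier–Ricci curvature (lazy). -/
def cOR (i j : V) : ℝ := 1 - W1 G (mLazy G i) (mLazy G j)

/-- Non-lazy Ollivier–Ricci curvature. -/
def cOR0 (i j : V) : ℝ := 1 - W1 G (unif G i) (unif G j)

/-- Positive part `[x]₊`. -/
def pos (x : ℝ) : ℝ := max x 0

/-- Triangle count `△(u,v)`. -/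
def tri (u v : V) : ℕ := (G.neighborFinset u ∩ G.neighborFinset v).card

/-- Unique neighbours `N(u) \ (N(v) ∪ {v})`. -/
def uniq (u v : V) : Finset V := G.neighborFinset u \ insert v (G.neighborFinset v)

/-- `ξ_u(u,v)`: unique neighbours of `u` having a neighbour among unique neighbours of `v`. -/
def xiSet (u v : V) : Finset V := (uniq G u v).filter fun k => ∃ w ∈ uniq G v u, G.Adj k w

/-- `Ξ_uv`. -/
def Xi (u v : V) : ℕ := (xiSet G u v).card + (xiSet G v u).card

/-- `□̃(k,u,v) = |N(k) ∩ (N(v)\(N(u)∪{u}))|`. -/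
def boxT (k u v : V) : ℕ := (G.neighborFinset k ∩ uniq G v u).card

/-- `ϖ_max(u,v)`. -/
def varpi (u v : V) : ℕ :=
  max (((G.neighborFinset u).erase v).sup fun k => boxT G k u v)
      (((G.neighborFinset v).erase u).sup fun w => boxT G w v u)

/-- `þ_max(u,v) = ϖ_max(u,v)·max{ρ_u,ρ_v}`. -/
def thMax (u v : V) : ℕ := varpi G u v * max (G.degree u) (G.degree v)

/-- Edgewise 4-cycle coefficient `C₄(u,v)`. -/
def C4 (u v : V) : ℝ := if 0 < Xi G u v then (Xi G u v : ℝ) / (thMax G u v : ℝ) else 0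

/-- Graph-wide 4-cycle constant `C₄(G)`. -/
def C4Graph : ℝ := sSup {x : ℝ | ∃ u v, G.Adj u v ∧ x = C4 G u v}

def rhoMin (i j : V) : ℕ := min (G.degree i) (G.degree j)

def rhoMax (i j : V) : ℕ := max (G.degree i) (G.degree j)

/-- `𝔖(i,j)`. -/
def frakS (i j : V) : ℝ := 2 / (G.degree i : ℝ) + 2 / (G.degree j : ℝ) - 2

/-- `𝔗(i,j)`. -/
def frakT (i j : V) : ℝ := 2 / (rhoMax G i j : ℝ) + 1 / (rhoMin G i j : ℝ)

/-- `𝔎(i,j)`. -/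
def frakK (i j : V) : ℝ := 1 - 1 / (rhoMin G i j : ℝ) - 1 / (rhoMax G i j : ℝ)

/-- `Z_min(i,j)`. -/
def Zmin (i j : V) : ℝ := (tri G i j : ℝ) / (rhoMin G i j : ℝ)

/-- `Z_max(i,j)`. -/
def Zmax (i j : V) : ℝ := (tri G i j : ℝ) / (rhoMax G i j : ℝ)

/-- Balanced Forman curvature. -/
def cBF (i j : V) : ℝ :=
  if rhoMin G i j = 1 then 0
  else frakS G i j + frakT G i j * (tri G i j : ℝ) + C4 G i j

/-- `M` is a matching in the cross-edge bipartite graph `B_ij`. -/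
def IsCrossMatching (i j : V) (M : Finset (V × V)) : Prop :=
  (∀ p ∈ M, p.1 ∈ uniq G i j ∧ p.2 ∈ uniq G j i ∧ G.Adj p.1 p.2) ∧
  (∀ p ∈ M, ∀ q ∈ M, p ≠ q → p.1 ≠ q.1 ∧ p.2 ≠ q.2)

/-- Maximum matching size `𝔪(i,j)` in the cross-edge bipartite graph. -/
def matchNum (i j : V) : ℕ :=
  sSup {n : ℕ | ∃ M : Finset (V × V), IsCrossMatching G i j M ∧ M.card = n}

/-- `𝒮(i,j) = 𝔪(i,j)/ρ_max`. -/
def SS (i j : V) : ℝ := (matchNum G i j : ℝ) / (rhoMax G i j : ℝ)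

/-- Lazy per-neighbour weight `w_u = (1-α)/ρ_u`. -/
def wA (α : ℝ) (u : V) : ℝ := (1 - α) / (G.degree u : ℝ)

/-- Lazy conductance sum `Σ`. -/
def SigmaA (αi αj : ℝ) (i j : V) : ℝ :=
  (G.degree i : ℝ) / (1 - αi) + (G.degree j : ℝ) / (1 - αj)

/-- `Const_α`. -/
def ConstA (αi αj : ℝ) (i j : V) : ℝ :=
  -1 + 2 * (min αi ((1 - αj) / (G.degree j : ℝ)) + min αj ((1 - αi) / (G.degree i : ℝ)))
    + (pos (αi - (1 - αj) / (G.degree j : ℝ)) + pos ((1 - αj) / (G.degree j : ℝ) - αi)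
      + pos (αj - (1 - αi) / (G.degree i : ℝ)) + pos ((1 - αi) / (G.degree i : ℝ) - αj))
    + ((G.degree i : ℝ) + (G.degree j : ℝ) - 2) / SigmaA G αi αj i j

/-- `Slope_α`. -/
def SlopeA (αi αj : ℝ) (i j : V) : ℝ := wA G αi i + wA G αj j - 2 / SigmaA G αi αj i j

/-- `α_⋆`: `α_min` when the non-lazy curvature is nonnegative, `α_max` otherwise. -/
def alphaStar (i j : V) : ℝ :=
  if 0 ≤ cOR0 G i j then min (alphaL G i) (alphaL G j) else max (alphaL G i) (alphaL G j)

/-- `Δ_ij(α) = α_max − α_min` for the canonical laziness. -/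
def DeltaL (i j : V) : ℝ := max (alphaL G i) (alphaL G j) - min (alphaL G i) (alphaL G j)

/-- `t_min(ϑ) = min{[(ϑ − Const_α)/Slope_α]₊, ρ_min − 1}`. -/
def tMin (αi αj : ℝ) (i j : V) (t : ℝ) : ℝ :=
  min (pos ((t - ConstA G αi αj i j) / SlopeA G αi αj i j)) ((rhoMin G i j : ℝ) - 1)

/-!
The vertices of `N(i) \ (N(j) ∪ {j})` carry mass `w_i` each under `m_i` and none under `m_j`, so all
of this mass has to move, and by a distance of at least `1`. Hence `W₁` is at least
`w_i |N(i) \ (N(j) ∪ {j})|`, and symmetrically with `i` and `j` exchanged. The quantity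
`1 - (Const_α + Slope_α △)` is the average of these two lower bounds with weights
`w_i / (w_i + w_j)` and `w_j / (w_i + w_j)`. Therefore `c_OR ≤ Const_α + Slope_α △`; solving for `△`
and using that `c_BF` is at least `𝔖 + 𝔗 △` gives the theorem.
-/

section Transport

omit [DecidableEq V] [DecidableRel G.Adj]

variable {G} {μ ν : V → ℝ} {π : V → V → ℝ}

lemma IsCoupling.prod (hμ : IsProb μ) (hν : IsProb ν) :
    IsCoupling μ ν fun x y => μ x * ν y := by
  refine ⟨fun x y => mul_nonneg (hμ.1 x) (hν.1 y), fun x => ?_, fun y => ?_⟩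
  · rw [← mul_sum, hν.2, mul_one]
  · rw [← sum_mul, hμ.2, one_mul]

lemma IsCoupling.swap (hπ : IsCoupling μ ν π) : IsCoupling ν μ fun x y => π y x :=
  ⟨fun x y => hπ.1 y x, hπ.2.2, hπ.2.1⟩

lemma IsCoupling.eq_zero_of_right_eq_zero (hπ : IsCoupling μ ν π) {y : V} (hy : ν y = 0) (x : V) :
    π x y = 0 :=
  (sum_eq_zero_iff_of_nonneg fun z _ => hπ.1 z y).1 ((hπ.2.2 y).trans hy) x (mem_univ x)

lemma cost_swap (π : V → V → ℝ) : cost G (fun x y => π y x) = cost G π := by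
  simp only [cost]
  rw [sum_comm]
  simp only [G.dist_comm]

lemma W1_comm (μ ν : V → ℝ) : W1 G μ ν = W1 G ν μ := by
  refine congrArg sInf (Set.ext fun c => ⟨?_, ?_⟩) <;>
    exact fun ⟨π, hπ, hc⟩ => ⟨_, hπ.swap, (cost_swap π).trans hc⟩

lemma IsCoupling.sum_le_cost (hπ : IsCoupling μ ν π) (hG : G.Connected) {s : Finset V}
    (hs : ∀ x ∈ s, ν x = 0) : ∑ x ∈ s, μ x ≤ cost G π := by
  have moves : ∀ x ∈ s, ∀ y, π x y ≤ G.dist x y * π x y := by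
    intro x hx y
    rcases eq_or_ne x y with rfl | hxy
    · simp [hπ.eq_zero_of_right_eq_zero (hs x hx)]
    · exact le_mul_of_one_le_left (hπ.1 x y) (mod_cast hG.pos_dist_of_ne hxy)
  calc ∑ x ∈ s, μ x = ∑ x ∈ s, ∑ y, π x y := sum_congr rfl fun x _ => (hπ.2.1 x).symm
    _ ≤ ∑ x ∈ s, ∑ y, G.dist x y * π x y :=
      sum_le_sum fun x hx => sum_le_sum fun y _ => moves x hx y
    _ ≤ cost G π := sum_le_univ_sum_of_nonneg fun x =>
      sum_nonneg fun y _ => mul_nonneg (Nat.cast_nonneg _) (hπ.1 x y)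

lemma sum_le_W1 (hG : G.Connected) (hμ : IsProb μ) (hν : IsProb ν) {s : Finset V}
    (hs : ∀ x ∈ s, ν x = 0) : ∑ x ∈ s, μ x ≤ W1 G μ ν := by
  refine le_csInf ⟨_, _, .prod hμ hν, rfl⟩ ?_
  rintro _ ⟨π, hπ, rfl⟩
  exact hπ.sum_le_cost hG hs

end Transport

section Weights

omit [DecidableEq V]

variable {G} {u i j : V} {α αi αj : ℝ}

lemma two_mul_min_add_pos_sub (a b : ℝ) : 2 * min a b + (pos (a - b) + pos (b - a)) = a + b := by
  unfold pos
  grind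

lemma wA_pos (hα : α < 1) (hu : 0 < G.degree u) : 0 < wA G α u :=
  div_pos (sub_pos.2 hα) (Nat.cast_pos.2 hu)

lemma wA_mul_degree (hu : 0 < G.degree u) : wA G α u * G.degree u = 1 - α :=
  div_mul_cancel₀ _ (Nat.cast_ne_zero.2 hu.ne')

lemma sigmaA_eq (αi αj : ℝ) (i j : V) :
    SigmaA G αi αj i j = (wA G αi i)⁻¹ + (wA G αj j)⁻¹ := by
  simp only [SigmaA, wA, inv_div]

lemma slopeA_pos (hi : 0 < wA G αi i) (hj : 0 < wA G αj j) : 0 < SlopeA G αi αj i j := by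
  have heq : SlopeA G αi αj i j
      = (wA G αi i ^ 2 + wA G αj j ^ 2) / (wA G αi i + wA G αj j) := by
    rw [SlopeA, sigmaA_eq]
    field_simp
    ring
  rw [heq]
  positivity

lemma constA_eq (hi : 0 < G.degree i) (hj : 0 < G.degree j) :
    ConstA G αi αj i j = 1 - wA G αi i * (G.degree i - 1) - wA G αj j * (G.degree j - 1)
      + (G.degree i + G.degree j - 2) / SigmaA G αi αj i j := by
  have hαi := wA_mul_degree (α := αi) hi
  have hαj := wA_mul_degree (α := αj) hj
  have hij := two_mul_min_add_pos_sub αi (wA G αj j)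
  have hji := two_mul_min_add_pos_sub αj (wA G αi i)
  simp only [ConstA, wA] at hαi hαj hij hji ⊢
  linarith

lemma tMin_eq_zero {t : ℝ} (hslope : 0 ≤ SlopeA G αi αj i j) (hρ : 1 ≤ rhoMin G i j)
    (ht : t ≤ ConstA G αi αj i j) : tMin G αi αj i j t = 0 := by
  have hquot : (t - ConstA G αi αj i j) / SlopeA G αi αj i j ≤ 0 :=
    div_nonpos_of_nonpos_of_nonneg (sub_nonpos.2 ht) hslope
  rw [tMin, pos, max_eq_right hquot, min_eq_left (sub_nonneg.2 (mod_cast hρ))]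

lemma frakT_nonneg (i j : V) : 0 ≤ frakT G i j := by
  unfold frakT
  positivity

end Weights

section Edge

variable {G} {u v x i j : V} {α αi αj : ℝ}

lemma isProb_mGen (hα : α ∈ Set.Icc (0 : ℝ) 1) (hu : 0 < G.degree u) : IsProb (mGen G α u) := by
  constructor
  · intro x
    have hdirac : 0 ≤ dirac u x := by unfold dirac; positivity
    have hunif : 0 ≤ unif G u x := by unfold unif; positivity
    exact add_nonneg (mul_nonneg hα.1 hdirac) (mul_nonneg (sub_nonneg.2 hα.2) hunif)
  · have hdirac : ∑ x, dirac u x = 1 := by simp [dirac]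
    have hunif : ∑ x, unif G u x = 1 := by
      simp [unif, ← sum_filter, ← G.neighborFinset_eq_filter, hu.ne']
    simp only [mGen, sum_add_distrib, ← mul_sum, hdirac, hunif]
    ring

lemma mGen_of_adj (h : G.Adj u x) : mGen G α u x = wA G α u := by
  simp [mGen, dirac, unif, wA, h, h.ne', div_eq_mul_inv]

lemma mGen_eq_zero (hne : x ≠ u) (h : ¬G.Adj u x) : mGen G α u x = 0 := by
  simp [mGen, dirac, unif, hne, h]

lemma mem_uniq : x ∈ uniq G u v ↔ G.Adj u x ∧ x ≠ v ∧ ¬G.Adj v x := by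
  simp [uniq]

lemma card_uniq_add_tri_add_one (h : G.Adj u v) :
    (uniq G u v).card + tri G u v + 1 = G.degree u := by
  have hv : v ∈ G.neighborFinset u := by simpa using h
  have hinter : (G.neighborFinset u ∩ insert v (G.neighborFinset v)).card = tri G u v + 1 := by
    rw [inter_insert_of_mem hv, card_insert_of_notMem (by simp), tri]
  rw [add_assoc, ← hinter, uniq, card_sdiff_add_card_inter, G.card_neighborFinset_eq_degree]

lemma tri_comm (u v : V) : tri G u v = tri G v u := by
  rw [tri, inter_comm, tri]

lemma tri_add_one_le_rhoMin (h : G.Adj i j) : tri G i j + 1 ≤ rhoMin G i j := by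
  have hi := card_uniq_add_tri_add_one h
  have hj := card_uniq_add_tri_add_one h.symm
  rw [tri_comm] at hj
  exact le_min (by lia) (by lia)

lemma wA_mul_card_uniq_le_W1 (hG : G.Connected) (hij : G.Adj i j)
    (hαi : αi ∈ Set.Icc (0 : ℝ) 1) (hαj : αj ∈ Set.Icc (0 : ℝ) 1) :
    wA G αi i * (uniq G i j).card ≤ W1 G (mGen G αi i) (mGen G αj j) := by
  have hmass : ∑ x ∈ uniq G i j, mGen G αi i x = wA G αi i * (uniq G i j).card := by
    rw [sum_congr rfl fun x hx => mGen_of_adj (mem_uniq.1 hx).1, sum_const, nsmul_eq_mul, mul_comm]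
  rw [← hmass]
  refine sum_le_W1 hG (isProb_mGen hαi hij.degree_pos_left) (isProb_mGen hαj hij.degree_pos_right)
    fun x hx => ?_
  obtain ⟨-, hne, hadj⟩ := mem_uniq.1 hx
  exact mGen_eq_zero hne hadj

lemma constA_add_slopeA_mul_tri (hij : G.Adj i j) (hi : 0 < wA G αi i) (hj : 0 < wA G αj j) :
    ConstA G αi αj i j + SlopeA G αi αj i j * tri G i j =
      1 - (wA G αi i / (wA G αi i + wA G αj j) * (wA G αi i * (uniq G i j).card)
        + wA G αj j / (wA G αi i + wA G αj j) * (wA G αj j * (uniq G j i).card)) := by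
  have hdi : (G.degree i : ℝ) = (uniq G i j).card + tri G i j + 1 :=
    mod_cast (card_uniq_add_tri_add_one hij).symm
  have hdj : (G.degree j : ℝ) = (uniq G j i).card + tri G i j + 1 := by
    rw [tri_comm]
    exact_mod_cast (card_uniq_add_tri_add_one hij.symm).symm
  rw [constA_eq hij.degree_pos_left hij.degree_pos_right, SlopeA, sigmaA_eq, hdi, hdj]
  field_simp
  ring

theorem one_sub_W1_mGen_le (hG : G.Connected) (hij : G.Adj i j)
    (hαi : αi ∈ Set.Ico (0 : ℝ) 1) (hαj : αj ∈ Set.Ico (0 : ℝ) 1) :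
    1 - W1 G (mGen G αi i) (mGen G αj j)
      ≤ ConstA G αi αj i j + SlopeA G αi αj i j * tri G i j := by
  have hwi : 0 < wA G αi i := wA_pos hαi.2 hij.degree_pos_left
  have hwj : 0 < wA G αj j := wA_pos hαj.2 hij.degree_pos_right
  have hαi' := Set.Ico_subset_Icc_self hαi
  have hαj' := Set.Ico_subset_Icc_self hαj
  have hleft := wA_mul_card_uniq_le_W1 hG hij hαi' hαj'
  have hright := W1_comm (G := G) _ _ ▸ wA_mul_card_uniq_le_W1 hG hij.symm hαj' hαi'
  rw [constA_add_slopeA_mul_tri hij hwi hwj]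
  exact sub_le_sub_left
    (convex_iff_div.1 (convex_Iic _) hleft hright hwi.le hwj.le (add_pos hwi hwj)) 1

lemma C4_nonneg (u v : V) : 0 ≤ C4 G u v := by
  unfold C4
  positivity

lemma frakS_add_frakT_mul_tri_le_cBF (h : rhoMin G i j ≠ 1) :
    frakS G i j + frakT G i j * tri G i j ≤ cBF G i j := by
  rw [cBF, if_neg h]
  exact le_add_of_nonneg_right (C4_nonneg i j)

lemma tMin_le_tri {t : ℝ} (hslope : 0 < SlopeA G αi αj i j)
    (ht : t ≤ ConstA G αi αj i j + SlopeA G αi αj i j * tri G i j) :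
    tMin G αi αj i j t ≤ tri G i j := by
  refine (min_le_left _ _).trans (max_le ?_ (Nat.cast_nonneg _))
  rw [div_le_iff₀' hslope]
  linarith

end Edge

/-- OR-to-BF lower transfer modulus, with the degenerate regimes (a), (b). -/
theorem stmt15 (hG : G.Connected) (i j : V) (hij : G.Adj i j)
    (hmin : 2 ≤ rhoMin G i j) (αi αj : ℝ)
    (hαi : αi ∈ Set.Ico (0:ℝ) 1) (hαj : αj ∈ Set.Ico (0:ℝ) 1) (t : ℝ) :
    (1 - W1 G (mGen G αi i) (mGen G αj j) ≥ t →
      cBF G i j ≥ frakS G i j + frakT G i j * tMin G αi αj i j t) ∧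
    (t ≤ ConstA G αi αj i j →
      frakS G i j + frakT G i j * tMin G αi αj i j t = frakS G i j) ∧
    (t > ConstA G αi αj i j + SlopeA G αi αj i j * ((rhoMin G i j : ℝ) - 1) →
      1 - W1 G (mGen G αi i) (mGen G αj j) < t) := by
  have hslope : 0 < SlopeA G αi αj i j :=
    slopeA_pos (wA_pos hαi.2 hij.degree_pos_left) (wA_pos hαj.2 hij.degree_pos_right)
  have hOR := one_sub_W1_mGen_le hG hij hαi hαj
  have htri : (tri G i j : ℝ) ≤ rhoMin G i j - 1 :=
    le_sub_iff_add_le.2 (mod_cast tri_add_one_le_rhoMin hij)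
  refine ⟨fun ht => ?_, fun ht => ?_, fun ht => ?_⟩
  · calc frakS G i j + frakT G i j * tMin G αi αj i j t
        ≤ frakS G i j + frakT G i j * tri G i j := by
          gcongr
          · exact frakT_nonneg i j
          · exact tMin_le_tri hslope (ht.le.trans hOR)
      _ ≤ cBF G i j := frakS_add_frakT_mul_tri_le_cBF (by lia)
  · rw [tMin_eq_zero hslope.le (by lia) ht, mul_zero, add_zero]
  · calc 1 - W1 G (mGen G αi i) (mGen G αj j)
        ≤ ConstA G αi αj i j + SlopeA G αi αj i j * tri G i j := hOR
      _ ≤ ConstA G αi αj i j + SlopeA G αi αj i j * (rhoMin G i j - 1) := by gcongr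
      _ < t := ht

end

end Curv
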